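/- The approximation factor 2 for the identical-schedules upper bound is asymptotically tight: for every ε > 0 there exist n ≥ 1 and p, q : {1,…,n} → ℝ≥0 such that min_σ C_{p+q}(σ) > (2 − ε)·OPT(0), where OPT(0) is the optimal value of RecSMSP with Δ = 0, i.e. OPT(0) = (min_σ C_p(σ)) + (min_τ C_q(τ)). In particular, the ratio UB/LB for the fully-crossed 0-1 instances tends to 2 as n → ∞. -/

import Mathlib

open Finset

/-- Cost of a schedule `σ` (position `i`, 0-indexed, has weight `n - i`,
i.e. position `i+1` in 1-indexed notation has weight `n + 1 - (i+1)`). -/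
noncomputable def cost (n : ℕ) (w : Fin n → ℝ) (σ : Equiv.Perm (Fin n)) : ℝ :=
  ∑ i : Fin n, ((n : ℝ) - ((i : ℕ) : ℝ)) * w (σ i)

/-- `f(M)`: minimal combined cost over pairs of schedules agreeing on the
positions of all jobs in `M`. -/
noncomputable def fval (n : ℕ) (p q : Fin n → ℝ) (M : Finset (Fin n)) : ℝ :=
  sInf {v : ℝ | ∃ σ τ : Equiv.Perm (Fin n),
    (∀ j ∈ M, σ.symm j = τ.symm j) ∧ v = cost n p σ + cost n q τ}

/-- `OPT(Δ)`: optimal value of the recoverable robust single machine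
scheduling problem. -/
noncomputable def OPT (n : ℕ) (p q : Fin n → ℝ) (Δ : ℕ) : ℝ :=
  sInf {v : ℝ | ∃ σ τ : Equiv.Perm (Fin n),
    Δ ≤ (Finset.univ.filter (fun j => σ.symm j = τ.symm j)).card ∧
    v = cost n p σ + cost n q τ}

/-- Value of (UB-SMSP): both stages forced identical. -/
noncomputable def UBval (n : ℕ) (p q : Fin n → ℝ) : ℝ :=
  sInf {v : ℝ | ∃ σ : Equiv.Perm (Fin n), v = cost n (fun j => p j + q j) σ}

/-- Value of (LB-SMSP): the two stages optimised independently. -/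
noncomputable def LBval (n : ℕ) (p q : Fin n → ℝ) : ℝ :=
  sInf {v : ℝ | ∃ σ : Equiv.Perm (Fin n), v = cost n p σ} +
  sInf {v : ℝ | ∃ τ : Equiv.Perm (Fin n), v = cost n q τ}

theorem sum_aux (c : ℝ) (m : ℕ) :
    ∑ i ∈ Finset.range m, (c - (i : ℝ)) = c * m - m * (m - 1) / 2 := by
  induction m with
  | zero => simp
  | succ k ih => rw [Finset.sum_range_succ, ih]; push_cast; ring

theorem cost_aux (m : ℕ) :
    cost (m + m) (fun j => if m ≤ (j : ℕ) then 1 else 0) 1 = (m : ℝ) * (m + 1) / 2 := by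
  unfold cost
  have h := Fin.sum_univ_eq_sum_range
    (fun i : ℕ => (((m + m : ℕ) : ℝ) - (i : ℝ)) * (if m ≤ i then 1 else 0)) (m + m)
  refine Eq.trans h ?_
  rw [Finset.sum_range_add]
  have h1 : ∑ i ∈ Finset.range m,
      (((m + m : ℕ) : ℝ) - (i : ℝ)) * (if m ≤ i then (1 : ℝ) else 0) = 0 := by
    apply Finset.sum_eq_zero
    intro i hi
    rw [if_neg (by simpa using hi), mul_zero]
  have h2 : ∑ i ∈ Finset.range m,
      (((m + m : ℕ) : ℝ) - ((m + i : ℕ) : ℝ)) * (if m ≤ m + i then (1 : ℝ) else 0)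
      = ∑ i ∈ Finset.range m, ((m : ℝ) - (i : ℝ)) := by
    apply Finset.sum_congr rfl
    intro i _
    rw [if_pos (Nat.le_add_right m i)]
    push_cast
    ring
  rw [h1, h2, sum_aux]
  ring

theorem cost_aux_rev (m : ℕ) :
    cost (m + m) (fun j => if m ≤ (j : ℕ) then 0 else 1) Fin.revPerm
      = (m : ℝ) * (m + 1) / 2 := by
  rw [← cost_aux]
  unfold cost
  apply Finset.sum_congr rfl
  intro i _
  have hi := i.isLt
  have h1 : (((1 : Equiv.Perm (Fin (m + m))) i : Fin (m + m)) : ℕ) = i := rfl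
  have h2 : ((Fin.revPerm i : Fin (m + m)) : ℕ) = m + m - (i + 1) := by
    rw [Fin.revPerm_apply, Fin.val_rev]
  beta_reduce
  congr 1
  split_ifs <;> first | rfl | omega

theorem cost_nonneg_aux (n : ℕ) (w : Fin n → ℝ) (hw : ∀ j, 0 ≤ w j)
    (σ : Equiv.Perm (Fin n)) : 0 ≤ cost n w σ := by
  unfold cost
  apply Finset.sum_nonneg
  intro i _
  have hi : ((i : ℕ) : ℝ) ≤ (n : ℝ) := by exact_mod_cast i.isLt.le
  exact mul_nonneg (by linarith) (hw _)

/-- the approximation factor 2 is asymptotically tight: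
for every `ε > 0` there is an instance with
`UB > (2 − ε) · OPT(0)`, where `OPT(0) = LB`. -/
theorem stmt_11 :
    ∀ ε : ℝ, 0 < ε → ∃ (n : ℕ) (p q : Fin n → ℝ),
      1 ≤ n ∧ (∀ j, 0 ≤ p j) ∧ (∀ j, 0 ≤ q j) ∧
      (2 - ε) * OPT n p q 0 < UBval n p q := by
  intro ε hε
  obtain ⟨m, hm⟩ := exists_nat_gt (1 / ε)
  have hm0 : (0 : ℝ) < m := lt_trans (by positivity) hm
  have hm1 : 0 < m := by exact_mod_cast hm0
  have hεm : 1 < m * ε := by rwa [div_lt_iff₀ hε] at hm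
  have hp : ∀ j : Fin (m + m), (0 : ℝ) ≤ (if m ≤ (j : ℕ) then 1 else 0) := by
    intro j; split_ifs <;> norm_num
  have hq : ∀ j : Fin (m + m), (0 : ℝ) ≤ (if m ≤ (j : ℕ) then 0 else 1) := by
    intro j; split_ifs <;> norm_num
  refine ⟨m + m, fun j => if m ≤ (j : ℕ) then 1 else 0,
    fun j => if m ≤ (j : ℕ) then 0 else 1, by omega, hp, hq, ?_⟩
  have hUB : (m : ℝ) * (2 * m + 1) ≤ UBval (m + m) (fun j => if m ≤ (j : ℕ) then 1 else 0)
      (fun j => if m ≤ (j : ℕ) then 0 else 1) := by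
    unfold UBval
    refine le_csInf ⟨_, ⟨1, rfl⟩⟩ ?_
    rintro v ⟨σ, rfl⟩
    apply le_of_eq
    unfold cost
    have h1 : ∀ j : Fin (m + m), ((if m ≤ (j : ℕ) then (1 : ℝ) else 0)
        + (if m ≤ (j : ℕ) then 0 else 1)) = 1 := by
      intro j; split_ifs <;> norm_num
    simp only [h1, mul_one]
    rw [Fin.sum_univ_eq_sum_range (fun i : ℕ => (((m + m : ℕ) : ℝ) - (i : ℝ))) (m + m), sum_aux]
    push_cast
    ring
  set P : Fin (m + m) → ℝ := fun j => if m ≤ (j : ℕ) then 1 else 0 with hP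
  set Q : Fin (m + m) → ℝ := fun j => if m ≤ (j : ℕ) then 0 else 1 with hQ
  have h0 : ∀ v ∈ {v : ℝ | ∃ σ τ : Equiv.Perm (Fin (m + m)),
      0 ≤ (Finset.univ.filter (fun j => σ.symm j = τ.symm j)).card ∧
      v = cost (m + m) P σ + cost (m + m) Q τ}, 0 ≤ v := by
    rintro v ⟨σ, τ, -, rfl⟩
    exact add_nonneg (cost_nonneg_aux _ _ hp _) (cost_nonneg_aux _ _ hq _)
  have hO0 : 0 ≤ OPT (m + m) P Q 0 := Real.sInf_nonneg h0
  have hO1 : OPT (m + m) P Q 0 ≤ (m : ℝ) * (m + 1) := by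
    unfold OPT
    apply csInf_le ⟨0, h0⟩
    refine ⟨1, Fin.revPerm, Nat.zero_le _, ?_⟩
    rw [hP, hQ, cost_aux, cost_aux_rev]
    ring
  refine lt_of_lt_of_le ?_ hUB
  by_cases h2 : 2 - ε ≤ 0
  · have := mul_nonpos_of_nonpos_of_nonneg h2 hO0
    have : 0 < (m : ℝ) * (2 * m + 1) := by positivity
    linarith
  · have h3 := mul_le_mul_of_nonneg_left hO1 (not_le.mp h2).le
    refine lt_of_le_of_lt h3 ?_
    have h4 : (2 - ε) * (m + 1) < 2 * m + 1 := by nlinarith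
    have h5 := mul_lt_mul_of_pos_left h4 hm0
    linarith
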